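/- The image of the standard polynomial S₃(x₁,x₂,x₃) = x₁x₂x₃ + x₂x₃x₁ + x₃x₁x₂ − x₁x₃x₂ − x₃x₂x₁ − x₂x₁x₃ on triples from M₃(ℂ) is all of M₃(ℂ). -/

import Mathlib

open Matrix

/-!
If `n` is invertible, an endomorphism `f ≠ 0` of trace zero in dimension `n` is not a homothety, so
some vector `v` is independent of `f v`. Put `v` first in a basis whose remaining vectors span a
hyperplane containing `f v`: the first diagonal entry vanishes, and the compression of `f` to the
hyperplane again has trace zero. By induction, if `n !` is invertible, every `n × n` matrix of trace
zero is conjugate to one with zero diagonal, and hence, after splitting off a scalar matrix, every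
`n × n` matrix is conjugate to one with constant diagonal.

Conjugations enter as algebra automorphisms, under which the image of `S₃` is invariant, so it
suffices to reach the `3 × 3` matrices with constant diagonal. If `2` is invertible, these are
exactly the values of the linear map `C ↦ S₃(A, B, C)` for `A = E₀₁ + E₁₂` and `B = E₁₂ + E₂₀`.
-/

open Module

section HyperplaneCompression

variable {R V : Type*} [CommRing R] [AddCommGroup V] [Module R V] {φ : Dual R V} {v : V}

/-- The projection onto the hyperplane `ker φ` along a vector `v` normalised by `φ v = 1`. -/
def kerProjection (hv : φ v = 1) : V →ₗ[R] LinearMap.ker φ :=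
  (LinearMap.id - φ.smulRight v).codRestrict (LinearMap.ker φ) fun x => by simp [hv]

theorem coe_kerProjection_apply (hv : φ v = 1) (x : V) :
    (kerProjection hv x : V) = x - φ x • v :=
  rfl

theorem kerProjection_apply_self (hv : φ v = 1) : kerProjection hv v = 0 :=
  Subtype.ext (by simp [coe_kerProjection_apply, hv])

theorem kerProjection_apply_coe (hv : φ v = 1) (w : LinearMap.ker φ) :
    kerProjection hv w = w :=
  Subtype.ext (by simp [coe_kerProjection_apply])

/-- The compression of an endomorphism to the hyperplane `ker φ` along `v`: the lower right block of
its matrix in a basis formed by `v` followed by a basis of `ker φ`. -/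
def kerCompression (hv : φ v = 1) (f : End R V) : End R (LinearMap.ker φ) :=
  kerProjection hv ∘ₗ f ∘ₗ (LinearMap.ker φ).subtype

variable {n : ℕ}

/-- The basis of `V` formed by `v` followed by a basis of the complementary hyperplane `ker φ`. -/
noncomputable def kerConsBasis (hv : φ v = 1) (w : Basis (Fin n) R (LinearMap.ker φ)) :
    Basis (Fin (n + 1)) R V :=
  Basis.mkFinCons v w (fun c x hx h => by simpa [hv, LinearMap.mem_ker.mp hx] using congrArg φ h)
    fun z => ⟨-φ z, by simp [hv]⟩

theorem kerConsBasis_zero (hv : φ v = 1) (w : Basis (Fin n) R (LinearMap.ker φ)) :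
    kerConsBasis hv w 0 = v := by
  simp [kerConsBasis]

theorem kerConsBasis_succ (hv : φ v = 1) (w : Basis (Fin n) R (LinearMap.ker φ)) (i : Fin n) :
    kerConsBasis hv w i.succ = w i := by
  simp [kerConsBasis]

theorem coord_kerConsBasis_zero (hv : φ v = 1) (w : Basis (Fin n) R (LinearMap.ker φ)) :
    (kerConsBasis hv w).coord 0 = φ := by
  refine (kerConsBasis hv w).ext (Fin.cases ?_ fun j => ?_)
  · rw [Basis.coord_apply, Basis.repr_self, Finsupp.single_eq_same, kerConsBasis_zero, hv]
  · rw [Basis.coord_apply, Basis.repr_self, Finsupp.single_eq_of_ne (Fin.succ_ne_zero j).symm,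
      kerConsBasis_succ, LinearMap.map_coe_ker]

theorem coord_kerConsBasis_succ (hv : φ v = 1) (w : Basis (Fin n) R (LinearMap.ker φ))
    (i : Fin n) : (kerConsBasis hv w).coord i.succ = w.coord i ∘ₗ kerProjection hv := by
  refine (kerConsBasis hv w).ext (Fin.cases ?_ fun j => ?_)
  · rw [Basis.coord_apply, Basis.repr_self, Finsupp.single_eq_of_ne (Fin.succ_ne_zero i),
      LinearMap.comp_apply, kerConsBasis_zero, kerProjection_apply_self, map_zero]
  · rw [LinearMap.comp_apply, kerConsBasis_succ, kerProjection_apply_coe, ← kerConsBasis_succ hv]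
    simp [Finsupp.single_apply]

theorem coord_kerConsBasis_zero_apply_self (hv : φ v = 1)
    (w : Basis (Fin n) R (LinearMap.ker φ)) (f : End R V) :
    (kerConsBasis hv w).coord 0 (f (kerConsBasis hv w 0)) = φ (f v) := by
  rw [coord_kerConsBasis_zero, kerConsBasis_zero]

theorem coord_kerConsBasis_succ_apply_self (hv : φ v = 1)
    (w : Basis (Fin n) R (LinearMap.ker φ)) (f : End R V) (i : Fin n) :
    (kerConsBasis hv w).coord i.succ (f (kerConsBasis hv w i.succ)) =
      w.coord i (kerCompression hv f (w i)) := by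
  rw [coord_kerConsBasis_succ, kerConsBasis_succ]
  rfl

theorem trace_eq_sum_coord_apply_self {ι : Type*} [Fintype ι] (b : Basis ι R V) (f : End R V) :
    LinearMap.trace R V f = ∑ i, b.coord i (f (b i)) := by
  classical
  simp [LinearMap.trace_eq_matrix_trace R b, Matrix.trace, LinearMap.toMatrix_apply]

theorem trace_eq_add_trace_kerCompression [Module.Free R (LinearMap.ker φ)]
    [Module.Finite R (LinearMap.ker φ)] (hv : φ v = 1) (f : End R V) :
    LinearMap.trace R V f = φ (f v) + LinearMap.trace R _ (kerCompression hv f) := by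
  nontriviality R
  let w := finBasis R (LinearMap.ker φ)
  simp only [trace_eq_sum_coord_apply_self (kerConsBasis hv w), trace_eq_sum_coord_apply_self w,
    Fin.sum_univ_succ, coord_kerConsBasis_zero_apply_self, coord_kerConsBasis_succ_apply_self]

end HyperplaneCompression

section ConstantDiagonal

variable {K V : Type*} [Field K] [AddCommGroup V] [Module K V]

theorem exists_dual_eq_one_and_eq_zero {v u : V} (h : LinearIndependent K ![v, u]) :
    ∃ φ : Dual K V, φ v = 1 ∧ φ u = 0 := by
  have hvu : v ∉ Submodule.span K {u} := fun hmem => by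
    obtain ⟨a, ha⟩ := Submodule.mem_span_singleton.mp hmem
    simpa using LinearIndependent.pair_iff.mp h 1 (-a) (by simp [ha])
  obtain ⟨ψ, hψv, hψu⟩ := Submodule.exists_le_ker_of_notMem hvu
  have hψu : ψ u = 0 := hψu (Submodule.mem_span_singleton_self u)
  exact ⟨(ψ v)⁻¹ • ψ, by simp [hψv], by simp [hψu]⟩

theorem exists_linearIndependent_pair_of_trace_eq_zero {f : End K V}
    (hV : (finrank K V : K) ≠ 0) (hf : f ≠ 0) (htr : LinearMap.trace K V f = 0) :
    ∃ v, LinearIndependent K ![v, f v] := by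
  have : FiniteDimensional K V := .of_finrank_pos (Nat.pos_of_ne_zero fun h => by simp [h] at hV)
  by_contra! h
  obtain ⟨a, rfl⟩ := LinearMap.exists_eq_smul_id_of_forall_notLinearIndependent h
  have ha : a = 0 := by simpa [hV] using htr
  exact hf (by rw [ha, zero_smul])

theorem exists_basis_coord_apply_self_eq_zero [FiniteDimensional K V] {n : ℕ}
    (hn : (n.factorial : K) ≠ 0) (hV : finrank K V = n) {f : End K V}
    (htr : LinearMap.trace K V f = 0) :
    ∃ b : Basis (Fin n) K V, ∀ i, b.coord i (f (b i)) = 0 := by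
  induction n generalizing V with
  | zero => exact ⟨finBasisOfFinrankEq K V hV, fun i => i.elim0⟩
  | succ n ih =>
    rcases eq_or_ne f 0 with rfl | hf
    · exact ⟨finBasisOfFinrankEq K V hV, by simp⟩
    have hn' : ((n + 1 : ℕ) : K) ≠ 0 ∧ (n.factorial : K) ≠ 0 := by
      rwa [Nat.factorial_succ, Nat.cast_mul, mul_ne_zero_iff] at hn
    obtain ⟨v, hv⟩ := exists_linearIndependent_pair_of_trace_eq_zero (hV ▸ hn'.1) hf htr
    obtain ⟨φ, hφv, hφfv⟩ := exists_dual_eq_one_and_eq_zero hv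
    have hker : finrank K (LinearMap.ker φ) = n := by
      have hφ : φ ≠ 0 := fun h => by simp [h] at hφv
      have := Dual.finrank_ker_add_one_of_ne_zero hφ
      omega
    have htr' : LinearMap.trace K _ (kerCompression hφv f) = 0 := by
      rwa [trace_eq_add_trace_kerCompression hφv, hφfv, zero_add] at htr
    obtain ⟨w, hw⟩ := ih hn'.2 hker htr'
    refine ⟨kerConsBasis hφv w, Fin.cases ?_ fun i => ?_⟩
    · rw [coord_kerConsBasis_zero_apply_self, hφfv]
    · rw [coord_kerConsBasis_succ_apply_self, hw]

theorem exists_algEquiv_diag_eq_zero {n : ℕ} (hn : (n.factorial : K) ≠ 0)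
    {M : Matrix (Fin n) (Fin n) K} (hM : M.trace = 0) :
    ∃ Φ : Matrix (Fin n) (Fin n) K ≃ₐ[K] Matrix (Fin n) (Fin n) K, (Φ M).diag = 0 := by
  obtain ⟨b, hb⟩ := exists_basis_coord_apply_self_eq_zero hn (finrank_fin_fun K)
    ((trace_toLin'_eq M).trans hM)
  refine ⟨toLinAlgEquiv'.trans (LinearMap.toMatrixAlgEquiv b), funext fun i => ?_⟩
  simpa [LinearMap.toMatrixAlgEquiv_apply] using hb i

theorem exists_algEquiv_diag_eq_const {n : ℕ} (hn : (n.factorial : K) ≠ 0)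
    (M : Matrix (Fin n) (Fin n) K) :
    ∃ (Φ : Matrix (Fin n) (Fin n) K ≃ₐ[K] Matrix (Fin n) (Fin n) K) (c : K),
      ∀ i, Φ M i i = c := by
  rcases n with _ | n
  · exact ⟨.refl, 0, fun i => i.elim0⟩
  have hn' : ((n + 1 : ℕ) : K) ≠ 0 := fun h => hn (by simp [Nat.factorial_succ, h])
  set c := M.trace / (n + 1 : ℕ)
  have htr : (M - algebraMap K _ c).trace = 0 := by
    rw [trace_sub, Algebra.algebraMap_eq_smul_one, trace_smul, trace_one, Fintype.card_fin,
      smul_eq_mul, div_mul_cancel₀ _ hn', sub_self]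
  obtain ⟨Φ, hΦ⟩ := exists_algEquiv_diag_eq_zero hn htr
  refine ⟨Φ, c, fun i => ?_⟩
  simpa [Matrix.algebraMap_matrix_apply, sub_eq_zero] using congrFun hΦ i

end ConstantDiagonal

/-- The standard polynomial `S₃` evaluated in a ring. -/
def standardThree {R : Type*} [Ring R] (a b c : R) : R :=
  a * b * c + b * c * a + c * a * b - a * c * b - c * b * a - b * a * c

theorem map_standardThree {R S F : Type*} [Ring R] [Ring S] [FunLike F R S] [RingHomClass F R S]
    (f : F) (a b c : R) :
    f (standardThree a b c) = standardThree (f a) (f b) (f c) := by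
  simp [standardThree]

theorem exists_standardThree_eq_of_diag_eq_const {K : Type*} [Field K] (h2 : (2 : K) ≠ 0)
    {D : Matrix (Fin 3) (Fin 3) K} {d : K} (hD : ∀ i, D i i = d) :
    ∃ A B C, standardThree A B C = D := by
  refine ⟨!![0, 1, 0; 0, 0, 1; 0, 0, 0], !![0, 0, 0; 0, 0, 1; 1, 0, 0],
    !![(D 0 2 + D 1 0) / 2, d, (D 1 2 + D 2 0 - D 0 1) / 2;
      (D 0 1 + D 1 2 - D 2 0) / 2, (D 1 0 - D 2 1) / 2, 0;
      0, (D 0 1 + D 1 2 + D 2 0) / 2, (D 0 2 - D 2 1) / 2], ?_⟩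
  ext i j
  fin_cases i <;> fin_cases j <;> simp [standardThree, hD] <;> field

theorem image_S3_eq_full_general {K : Type*} [Field K] (h2 : (2 : K) ≠ 0) (h3 : (3 : K) ≠ 0)
    (D : Matrix (Fin 3) (Fin 3) K) : ∃ A B C, standardThree A B C = D := by
  have h6 : (Nat.factorial 3 : K) ≠ 0 := by
    have : (Nat.factorial 3 : K) = 2 * 3 := by norm_num [Nat.factorial]
    exact this ▸ mul_ne_zero h2 h3
  obtain ⟨Φ, d, hΦ⟩ := exists_algEquiv_diag_eq_const h6 D
  obtain ⟨A, B, C, h⟩ := exists_standardThree_eq_of_diag_eq_const h2 hΦ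
  exact ⟨Φ.symm A, Φ.symm B, Φ.symm C, by rw [← map_standardThree, h, Φ.symm_apply_apply]⟩

/-- the image of the standard polynomial `S₃` on triples from `M₃(ℂ)` is
all of `M₃(ℂ)`. -/
theorem image_S3_eq_full
    (S3 : Matrix (Fin 3) (Fin 3) ℂ → Matrix (Fin 3) (Fin 3) ℂ → Matrix (Fin 3) (Fin 3) ℂ →
      Matrix (Fin 3) (Fin 3) ℂ)
    (hS3 : ∀ A B C, S3 A B C =
      A * B * C + B * C * A + C * A * B - A * C * B - C * B * A - B * A * C) :
    ∀ D : Matrix (Fin 3) (Fin 3) ℂ, ∃ A B C, S3 A B C = D := by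
  simpa only [hS3, standardThree] using image_S3_eq_full_general (K := ℂ) two_ne_zero three_ne_zero
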